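/- arXiv:1405.0934 — 2 statements merged into one kernel-verified Lean document; each statement's English description precedes it below -/
import Mathlib

section
/- For all real x with 0 < x < π, the following Wilker-type inequality holds: 3 + (x/π)⁴ · x/(sin x) < 2·x/(sin x) + x/(tan x) < 3 + (x/π)³ · x/(sin x). -/
/-!
After multiplication by `sin x > 0` the claim reads `(x / π) ^ 4 * x < W x < (x / π) ^ 3 * x` with
`W x = 2 * x + x * cos x - 3 * sin x`. Since `W π = π`, it follows once `W x / x ^ 4` is strictly
increasing and `W x / x ^ 5` strictly decreasing on `(0, π]`, i.e. `4 * W x < x * W' x < 5 * W x`.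

Both inequalities come from the positivity on `(0, π)` of
`G x = (3 - x ^ 2) * sin x - 3 * x * cos x`: half-angle formulas give
`x * W' x - 4 * W x = 8 * cos (x / 2) * G (x / 2)`, while `5 * W x - x * W' x` vanishes at `0`
together with its first derivative and has second derivative `G x`.
-/

open Real Set

section Monotonicity

theorem lt_of_hasDerivAt_lt {f g f' g' : ℝ → ℝ} {a b x : ℝ}
    (hf : ContinuousOn f (Ico a b)) (hg : ContinuousOn g (Ico a b))
    (hf' : ∀ y ∈ Ioo a b, HasDerivAt f (f' y) y) (hg' : ∀ y ∈ Ioo a b, HasDerivAt g (g' y) y)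
    (hlt : ∀ y ∈ Ioo a b, f' y < g' y) (ha : f a ≤ g a) (hx : x ∈ Ioo a b) : f x < g x := by
  have hmono : StrictMonoOn (g - f) (Ico a b) := by
    refine strictMonoOn_of_deriv_pos (convex_Ico a b) (hg.sub hf) fun y hy ↦ ?_
    rw [interior_Ico] at hy
    rw [((hg' y hy).sub (hf' y hy)).deriv]
    exact sub_pos.2 (hlt y hy)
  have hax : g a - f a < g x - f x :=
    hmono (left_mem_Ico.2 (hx.1.trans hx.2)) (Ioo_subset_Ico_self hx) hx.1
  linarith

theorem hasDerivAt_div_pow {𝕜 : Type*} [NontriviallyNormedField 𝕜] {f : 𝕜 → 𝕜} {f' x : 𝕜}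
    (hf : HasDerivAt f f' x) (hx : x ≠ 0) (n : ℕ) :
    HasDerivAt (fun y ↦ f y / y ^ n) ((x * f' - n * f x) / x ^ (n + 1)) x := by
  refine (hf.fun_div (hasDerivAt_pow n x) (pow_ne_zero n hx)).congr_deriv ?_
  cases n with
  | zero => simp [hx]
  | succ k =>
    rw [Nat.add_sub_cancel]
    field_simp
    ring

variable {f : ℝ → ℝ} {s : Set ℝ} {n : ℕ}

theorem strictMonoOn_div_pow (hs : Convex ℝ s) (hs₀ : s ⊆ Ioi 0) (hf : ContinuousOn f s)
    (hd : ∀ x ∈ interior s, DifferentiableAt ℝ f x)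
    (hlt : ∀ x ∈ interior s, n * f x < x * deriv f x) :
    StrictMonoOn (fun x ↦ f x / x ^ n) s := by
  refine strictMonoOn_of_deriv_pos hs
    (hf.div (by fun_prop) fun x hx ↦ pow_ne_zero n (hs₀ hx).ne') fun x hx ↦ ?_
  have hx₀ : 0 < x := hs₀ (interior_subset hx)
  rw [(hasDerivAt_div_pow (hd x hx).hasDerivAt hx₀.ne' n).deriv]
  exact div_pos (sub_pos.2 (hlt x hx)) (pow_pos hx₀ _)

theorem strictAntiOn_div_pow (hs : Convex ℝ s) (hs₀ : s ⊆ Ioi 0) (hf : ContinuousOn f s)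
    (hd : ∀ x ∈ interior s, DifferentiableAt ℝ f x)
    (hlt : ∀ x ∈ interior s, x * deriv f x < n * f x) :
    StrictAntiOn (fun x ↦ f x / x ^ n) s := by
  have hneg : StrictMonoOn (fun x ↦ (-f) x / x ^ n) s :=
    strictMonoOn_div_pow hs hs₀ hf.neg (fun x hx ↦ (hd x hx).neg) fun x hx ↦ by
      simpa [deriv.neg] using hlt x hx
  intro x hx y hy hxy
  simpa [neg_div] using hneg hx hy hxy

end Monotonicity

section Trigonometric

variable {x : ℝ}

theorem mul_cos_lt_sin (hx : x ∈ Ioo 0 π) : x * cos x < sin x := by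
  have hderiv (y : ℝ) : HasDerivAt (fun y ↦ y * cos y) (cos y - y * sin y) y :=
    ((hasDerivAt_id' y).mul (hasDerivAt_cos y)).congr_deriv (by ring)
  refine lt_of_hasDerivAt_lt (by fun_prop) (by fun_prop) (fun y _ ↦ hderiv y)
    (fun y _ ↦ hasDerivAt_sin y) (fun y hy ↦ ?_) (by simp) hx
  exact sub_lt_self _ (mul_pos hy.1 (sin_pos_of_mem_Ioo hy))

theorem three_mul_mul_cos_lt (hx : x ∈ Ioo 0 π) : 3 * x * cos x < (3 - x ^ 2) * sin x := by
  have hleft (y : ℝ) : HasDerivAt (fun y ↦ 3 * y * cos y) (3 * cos y - 3 * y * sin y) y :=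
    (((hasDerivAt_id' y).const_mul 3).mul (hasDerivAt_cos y)).congr_deriv (by ring)
  have hright (y : ℝ) : HasDerivAt (fun y ↦ (3 - y ^ 2) * sin y)
      ((3 - y ^ 2) * cos y - 2 * y * sin y) y :=
    (((hasDerivAt_pow 2 y).const_sub 3).mul (hasDerivAt_sin y)).congr_deriv (by ring)
  refine lt_of_hasDerivAt_lt (by fun_prop) (by fun_prop) (fun y _ ↦ hleft y)
    (fun y _ ↦ hright y) (fun y hy ↦ ?_) (by simp) hx
  have hmul : y * (y * cos y) < y * sin y := mul_lt_mul_of_pos_left (mul_cos_lt_sin hy) hy.1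
  linarith

theorem eight_mul_cos_add_lt (hx : x ∈ Ioo 0 π) :
    8 * cos x + 5 * x * sin x < 8 + x ^ 2 * cos x := by
  have hleft (y : ℝ) : HasDerivAt (fun y ↦ 8 * cos y + 5 * y * sin y)
      (5 * y * cos y - 3 * sin y) y :=
    (((hasDerivAt_cos y).const_mul 8).add
      (((hasDerivAt_id' y).const_mul 5).mul (hasDerivAt_sin y))).congr_deriv (by ring)
  have hright (y : ℝ) : HasDerivAt (fun y ↦ 8 + y ^ 2 * cos y)
      (2 * y * cos y - y ^ 2 * sin y) y :=
    (((hasDerivAt_pow 2 y).mul (hasDerivAt_cos y)).const_add 8).congr_deriv (by ring)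
  refine lt_of_hasDerivAt_lt (by fun_prop) (by fun_prop) (fun y _ ↦ hleft y)
    (fun y _ ↦ hright y) (fun y hy ↦ ?_) (by simp) hx
  linarith [three_mul_mul_cos_lt hy]

end Trigonometric

/-- The function `W` with `2 * (x / sin x) + x / tan x - 3 = W x / sin x`, which carries the
Wilker-type inequality once the denominator `sin x` is cleared. -/
noncomputable def wilkerNumerator (x : ℝ) : ℝ :=
  2 * x + x * cos x - 3 * sin x

namespace wilkerNumerator

variable {x : ℝ}

theorem hasDerivAt (x : ℝ) : HasDerivAt wilkerNumerator (2 - 2 * cos x - x * sin x) x :=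
  ((((hasDerivAt_id' x).const_mul 2).add ((hasDerivAt_id' x).mul (hasDerivAt_cos x))).sub
    ((hasDerivAt_sin x).const_mul 3)).congr_deriv (by ring)

theorem deriv_eq (x : ℝ) : deriv wilkerNumerator x = 2 - 2 * cos x - x * sin x :=
  (hasDerivAt x).deriv

theorem differentiable : Differentiable ℝ wilkerNumerator :=
  fun x ↦ (hasDerivAt x).differentiableAt

theorem apply_pi : wilkerNumerator π = π := by
  simp only [wilkerNumerator, cos_pi, sin_pi]
  ring

theorem mul_deriv_sub_four_mul (x : ℝ) :
    x * deriv wilkerNumerator x - 4 * wilkerNumerator x =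
      8 * cos (x / 2) * ((3 - (x / 2) ^ 2) * sin (x / 2) - 3 * (x / 2) * cos (x / 2)) := by
  obtain ⟨t, rfl⟩ : ∃ t, x = 2 * t := ⟨x / 2, by ring⟩
  rw [deriv_eq, wilkerNumerator, mul_div_cancel_left₀ t two_ne_zero, sin_two_mul, cos_two_mul]
  ring

theorem four_mul_lt_mul_deriv (hx : x ∈ Ioo 0 π) :
    4 * wilkerNumerator x < x * deriv wilkerNumerator x := by
  have hcos : 0 < cos (x / 2) :=
    cos_pos_of_mem_Ioo ⟨by linarith [hx.1, pi_pos], by linarith [hx.2]⟩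
  have hhalf := three_mul_mul_cos_lt (x := x / 2) ⟨by linarith [hx.1], by linarith [hx.1, hx.2]⟩
  rw [← sub_pos, mul_deriv_sub_four_mul]
  exact mul_pos (by positivity) (sub_pos.2 hhalf)

theorem mul_deriv_lt_five_mul (hx : x ∈ Ioo 0 π) :
    x * deriv wilkerNumerator x < 5 * wilkerNumerator x := by
  have hsecond (y : ℝ) : HasDerivAt (deriv wilkerNumerator) (sin y - y * cos y) y := by
    rw [funext deriv_eq]
    exact ((((hasDerivAt_cos y).const_mul 2).const_sub 2).sub
      ((hasDerivAt_id' y).mul (hasDerivAt_sin y))).congr_deriv (by ring)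
  have hleft (y : ℝ) : HasDerivAt (fun y ↦ y * deriv wilkerNumerator y)
      (deriv wilkerNumerator y + y * (sin y - y * cos y)) y :=
    ((hasDerivAt_id' y).mul (hsecond y)).congr_deriv (by ring)
  have hright (y : ℝ) : HasDerivAt (fun y ↦ 5 * wilkerNumerator y)
      (5 * deriv wilkerNumerator y) y :=
    (differentiable y).hasDerivAt.const_mul 5
  refine lt_of_hasDerivAt_lt (HasDerivAt.continuousOn fun y _ ↦ hleft y)
    (HasDerivAt.continuousOn fun y _ ↦ hright y) (fun y _ ↦ hleft y) (fun y _ ↦ hright y)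
    (fun y hy ↦ ?_) (by simp [wilkerNumerator]) hx
  rw [deriv_eq]
  linarith [eight_mul_cos_add_lt hy]

theorem strictMonoOn_div_pow_four : StrictMonoOn (fun x ↦ wilkerNumerator x / x ^ 4) (Ioc 0 π) :=
  strictMonoOn_div_pow (convex_Ioc 0 π) Ioc_subset_Ioi_self differentiable.continuous.continuousOn
    (fun x _ ↦ differentiable x) fun x hx ↦ four_mul_lt_mul_deriv (by rwa [interior_Ioc] at hx)

theorem strictAntiOn_div_pow_five : StrictAntiOn (fun x ↦ wilkerNumerator x / x ^ 5) (Ioc 0 π) :=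
  strictAntiOn_div_pow (convex_Ioc 0 π) Ioc_subset_Ioi_self differentiable.continuous.continuousOn
    (fun x _ ↦ differentiable x) fun x hx ↦ mul_deriv_lt_five_mul (by rwa [interior_Ioc] at hx)

theorem lt_div_pi_pow_three_mul (hx : x ∈ Ioo 0 π) : wilkerNumerator x < (x / π) ^ 3 * x := by
  have hquot : wilkerNumerator x / x ^ 4 < wilkerNumerator π / π ^ 4 :=
    strictMonoOn_div_pow_four (Ioo_subset_Ioc_self hx) (right_mem_Ioc.2 pi_pos) hx.2
  calc
    wilkerNumerator x < π / π ^ 4 * x ^ 4 := by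
      rwa [apply_pi, div_lt_iff₀ (pow_pos hx.1 4)] at hquot
    _ = (x / π) ^ 3 * x := by field_simp

theorem div_pi_pow_four_mul_lt (hx : x ∈ Ioo 0 π) : (x / π) ^ 4 * x < wilkerNumerator x := by
  have hquot : wilkerNumerator π / π ^ 5 < wilkerNumerator x / x ^ 5 :=
    strictAntiOn_div_pow_five (Ioo_subset_Ioc_self hx) (right_mem_Ioc.2 pi_pos) hx.2
  calc
    (x / π) ^ 4 * x = π / π ^ 5 * x ^ 5 := by field_simp
    _ < wilkerNumerator x := by
      rwa [apply_pi, lt_div_iff₀ (pow_pos hx.1 5)] at hquot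

theorem three_add_div_sin (hx : sin x ≠ 0) :
    3 + wilkerNumerator x / sin x = 2 * (x / sin x) + x * cos x / sin x := by
  rw [wilkerNumerator]
  field_simp
  ring

end wilkerNumerator

theorem wilker_type_inequality (x : ℝ) (hx0 : 0 < x) (hxpi : x < Real.pi) :
    3 + (x / Real.pi) ^ 4 * (x / Real.sin x) < 2 * (x / Real.sin x) + x * Real.cos x / Real.sin x ∧
    2 * (x / Real.sin x) + x * Real.cos x / Real.sin x < 3 + (x / Real.pi) ^ 3 * (x / Real.sin x) := by
  have hsin : 0 < sin x := sin_pos_of_pos_of_lt_pi hx0 hxpi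
  rw [← wilkerNumerator.three_add_div_sin hsin.ne', ← mul_div_assoc, ← mul_div_assoc]
  constructor <;> gcongr
  · exact wilkerNumerator.div_pi_pow_four_mul_lt ⟨hx0, hxpi⟩
  · exact wilkerNumerator.lt_div_pi_pow_three_mul ⟨hx0, hxpi⟩
end

section
/- For all real x with 0 < x < π/2, the following chain of inequalities holds with α = π²/6 − 1 and β = 1/2: (sin x)/x < (π² − x²)/(π² + α·x²) < (2 + cos x)/3 < (π² − x²)/(π² + β·x²). -/
/-!
Write `u = (x / π) ^ 2`. Euler's product gives `sinc x = ∏ (1 - u / n ^ 2)` over `n ≥ 1`. Dividing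
by the factor `n = 1` and applying `∏ (1 - v i) * (1 + ∑ v i) < 1`, valid for `0 < v i ≤ 1`, to the
rest gives `sinc x / (1 - u) < 1 / (1 + u * ∑_{n ≥ 2} n⁻²)`, which is the first inequality, with
`α = π ^ 2 / 6 - 1` appearing as the tail of `ζ(2)`. The second inequality follows from the first
one at `x / 2`, because `1 - cos x = 2 * sin (x / 2) ^ 2`. For the third, the same argument applied
to the cosine product over odd integers bounds `cos x` with the constant `π ^ 2 / 2 - 4`, which
exceeds `1 / 2` because `π > 3`.
-/

open Filter Finset Real Topology

section InfiniteProduct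

variable {u : ℕ → ℝ} {c p s : ℝ}

theorem antitone_prod_one_sub_mul_one_add_sum (h0 : ∀ i, 0 ≤ u i) (h1 : ∀ i, u i ≤ 1) :
    Antitone fun n ↦ (∏ i ∈ range n, (1 - u i)) * (1 + ∑ i ∈ range n, u i) := by
  refine antitone_nat_of_succ_le fun n ↦ ?_
  have hprod : 0 ≤ ∏ i ∈ range n, (1 - u i) := prod_nonneg fun i _ ↦ sub_nonneg.2 (h1 i)
  have hsum : 0 ≤ ∑ i ∈ range n, u i := sum_nonneg fun i _ ↦ h0 i
  have hfactor : (1 - u n) * (1 + (∑ i ∈ range n, u i + u n)) ≤ 1 + ∑ i ∈ range n, u i := by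
    linear_combination mul_nonneg (h0 n) (add_nonneg hsum (h0 n))
  rw [prod_range_succ, sum_range_succ, mul_assoc]
  gcongr

theorem mul_one_add_lt_one_of_tendsto_prod_one_sub (h0 : ∀ i, 0 ≤ u i) (h1 : ∀ i, u i ≤ 1)
    (hu : 0 < u 0) (hp : Tendsto (fun n ↦ ∏ i ∈ range n, (1 - u i)) atTop (𝓝 p))
    (hs : HasSum u s) : p * (1 + s) < 1 := by
  have hlim := hp.mul (hs.tendsto_sum_nat.const_add 1)
  calc p * (1 + s) ≤ (1 - u 0) * (1 + u 0) := by
        simpa using (antitone_prod_one_sub_mul_one_add_sum h0 h1).le_of_tendsto hlim 1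
    _ < 1 := by nlinarith

theorem lt_div_of_tendsto_prod_one_sub_mul (h0 : ∀ i, 0 < u i) (h1 : ∀ i, u i ≤ 1) (hu : u 0 = 1)
    (hs : HasSum u s) (hc0 : 0 < c) (hc1 : c < 1)
    (hp : Tendsto (fun n ↦ ∏ i ∈ range n, (1 - c * u i)) atTop (𝓝 p)) :
    p < (1 - c) / (1 + (s - 1) * c) := by
  have hc : 0 < 1 - c := sub_pos.2 hc1
  have hs_tail : HasSum (fun i ↦ u (i + 1)) (s - 1) := by
    simpa [hu] using (hasSum_nat_add_iff' 1).2 hs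
  have hp_tail : Tendsto (fun n ↦ ∏ i ∈ range n, (1 - c * u (i + 1))) atTop
      (𝓝 (p / (1 - c))) := by
    refine ((hp.comp (tendsto_add_atTop_nat 1)).div_const (1 - c)).congr fun n ↦ ?_
    simp [prod_range_succ', hu, hc.ne']
  have hlt : p / (1 - c) * (1 + c * (s - 1)) < 1 :=
    mul_one_add_lt_one_of_tendsto_prod_one_sub (fun i ↦ (mul_pos hc0 (h0 _)).le)
      (fun i ↦ mul_le_one₀ hc1.le (h0 _).le (h1 _)) (mul_pos hc0 (h0 _)) hp_tail
      (hs_tail.mul_left c)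
  have hs1 : 0 ≤ s - 1 := hs_tail.nonneg fun i ↦ (h0 _).le
  rw [lt_div_iff₀ (by positivity)]
  rwa [div_mul_eq_mul_div, div_lt_one hc, mul_comm c] at hlt

end InfiniteProduct

theorem hasSum_one_div_succ_sq : HasSum (fun n : ℕ ↦ 1 / ((n : ℝ) + 1) ^ 2) (π ^ 2 / 6) := by
  simpa using (hasSum_nat_add_iff' 1).2 hasSum_zeta_two

theorem hasSum_one_div_odd_sq : HasSum (fun n : ℕ ↦ 1 / (2 * (n : ℝ) + 1) ^ 2) (π ^ 2 / 8) := by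
  let f : ℕ → ℝ := fun n ↦ 1 / (n : ℝ) ^ 2
  have hf : HasSum f (π ^ 2 / 6) := hasSum_zeta_two
  have heven : HasSum (fun n ↦ f (2 * n)) (1 / 4 * (π ^ 2 / 6)) := by
    have hquarter (n : ℕ) : f (2 * n) = 1 / 4 * f n := by
      simp only [f]
      push_cast
      ring
    simpa only [hquarter] using hf.mul_left (1 / 4)
  have hodd : Summable fun n ↦ f (2 * n + 1) :=
    hf.summable.comp_injective fun m n h ↦ by simpa using h
  have hsum : 1 / 4 * (π ^ 2 / 6) + ∑' n, f (2 * n + 1) = π ^ 2 / 6 :=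
    (heven.even_add_odd hodd.hasSum).unique hf
  have htsum : ∑' n, f (2 * n + 1) = π ^ 2 / 8 := by linarith
  simpa [f] using hodd.hasSum_iff.2 htsum

theorem tendsto_prod_sinc (x : ℝ) :
    Tendsto (fun n ↦ ∏ i ∈ range n, (1 - (x / π) ^ 2 / ((i : ℝ) + 1) ^ 2)) atTop
      (𝓝 (sinc x)) := by
  rcases eq_or_ne x 0 with rfl | hx
  · simp
  have hpi : π * (x / π) = x := mul_div_cancel₀ x pi_ne_zero
  have heuler := (tendsto_euler_sin_prod (x / π)).div_const x
  simp only [hpi] at heuler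
  simpa [sinc_of_ne_zero hx, hx] using heuler

theorem sinc_two_mul (x : ℝ) : sinc (2 * x) = sinc x * cos x := by
  rcases eq_or_ne x 0 with rfl | hx
  · simp
  rw [sinc_of_ne_zero hx, sinc_of_ne_zero (by simpa using hx), sin_two_mul]
  field_simp

theorem prod_range_two_mul_one_sub_div_sq (c : ℝ) (n : ℕ) :
    ∏ i ∈ range (2 * n), (1 - c / ((i : ℝ) + 1) ^ 2) =
      (∏ i ∈ range n, (1 - c / (2 * (i : ℝ) + 1) ^ 2)) *
        ∏ i ∈ range n, (1 - c / 4 / ((i : ℝ) + 1) ^ 2) := by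
  induction n with
  | zero => simp
  | succ n ih =>
    have heven : 1 - c / (2 * (n : ℝ) + 1 + 1) ^ 2 = 1 - c / 4 / ((n : ℝ) + 1) ^ 2 := by
      rw [div_div]
      ring
    rw [show 2 * (n + 1) = 2 * n + 1 + 1 by ring]
    simp only [prod_range_succ, ih]
    push_cast
    rw [heven]
    ring

-- Divide the product for `sinc (2 * x) = sinc x * cos x` by the product for `sinc x`.
theorem tendsto_prod_cos {x : ℝ} (hx : sinc x ≠ 0) :
    Tendsto (fun n ↦ ∏ i ∈ range n, (1 - (2 * x / π) ^ 2 / (2 * (i : ℝ) + 1) ^ 2)) atTop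
      (𝓝 (cos x)) := by
  have hdouble := (tendsto_prod_sinc (2 * x)).comp (tendsto_id.const_mul_atTop' two_pos)
  have hquot := hdouble.div (tendsto_prod_sinc x) hx
  rw [sinc_two_mul, mul_div_cancel_left₀ _ hx] at hquot
  refine hquot.congr' ?_
  filter_upwards [(tendsto_prod_sinc x).eventually_ne hx] with n hn
  have hquarter : (2 * x / π) ^ 2 / 4 = (x / π) ^ 2 := by ring
  simp only [Pi.div_apply, Function.comp_apply, id, prod_range_two_mul_one_sub_div_sq, hquarter]
  exact mul_div_cancel_right₀ _ hn

theorem sinc_pos_of_abs_lt_pi {x : ℝ} (hx : |x| < π) : 0 < sinc x := by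
  wlog hx0 : 0 ≤ x generalizing x
  · simpa [sinc_neg] using this (x := -x) (by simpa using hx) (by linarith)
  rcases hx0.eq_or_lt with rfl | hpos
  · simp
  · rw [sinc_of_ne_zero hpos.ne']
    exact div_pos (sin_pos_of_pos_of_lt_pi hpos (lt_of_abs_lt hx)) hpos

section Bounds

variable {x : ℝ}

theorem sinc_lt_div (hx0 : x ≠ 0) (hx : |x| < π) :
    sinc x < (π ^ 2 - x ^ 2) / (π ^ 2 + (π ^ 2 / 6 - 1) * x ^ 2) := by
  have hsq : x ^ 2 < π ^ 2 := sq_lt_sq' (neg_lt_of_abs_lt hx) (lt_of_abs_lt hx)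
  have hc1 : (x / π) ^ 2 < 1 := by rwa [div_pow, div_lt_one (by positivity)]
  calc sinc x < (1 - (x / π) ^ 2) / (1 + (π ^ 2 / 6 - 1) * (x / π) ^ 2) :=
        lt_div_of_tendsto_prod_one_sub_mul (fun i ↦ by positivity)
          (fun i ↦ div_le_one_of_le₀ (one_le_pow₀ (by simp)) (by positivity)) (by simp)
          hasSum_one_div_succ_sq (by positivity) hc1
          (by simpa only [mul_one_div] using tendsto_prod_sinc x)
    _ = (π ^ 2 - x ^ 2) / (π ^ 2 + (π ^ 2 / 6 - 1) * x ^ 2) := by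
        rw [← mul_div_mul_left _ _ (pow_ne_zero 2 pi_ne_zero)]
        congr 1 <;> field_simp

theorem cos_lt_div (hx0 : x ≠ 0) (hx : |x| < π / 2) :
    cos x < (π ^ 2 - 4 * x ^ 2) / (π ^ 2 + (π ^ 2 / 2 - 4) * x ^ 2) := by
  have hsq : x ^ 2 < (π / 2) ^ 2 := sq_lt_sq' (neg_lt_of_abs_lt hx) (lt_of_abs_lt hx)
  have hc1 : (2 * x / π) ^ 2 < 1 := by
    rw [div_pow, div_lt_one (by positivity)]
    linarith
  have hsinc : sinc x ≠ 0 := (sinc_pos_of_abs_lt_pi (by linarith [pi_pos])).ne'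
  calc cos x < (1 - (2 * x / π) ^ 2) / (1 + (π ^ 2 / 8 - 1) * (2 * x / π) ^ 2) :=
        lt_div_of_tendsto_prod_one_sub_mul (fun i ↦ by positivity)
          (fun i ↦ div_le_one_of_le₀ (one_le_pow₀ (by simp)) (by positivity)) (by simp)
          hasSum_one_div_odd_sq (by positivity) hc1
          (by simpa only [mul_one_div] using tendsto_prod_cos hsinc)
    _ = (π ^ 2 - 4 * x ^ 2) / (π ^ 2 + (π ^ 2 / 2 - 4) * x ^ 2) := by
        rw [← mul_div_mul_left _ _ (pow_ne_zero 2 pi_ne_zero)]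
        congr 1 <;> field_simp <;> ring

theorem cos_eq_one_sub_sinc_half_sq (x : ℝ) : cos x = 1 - x ^ 2 / 2 * sinc (x / 2) ^ 2 := by
  rcases eq_or_ne x 0 with rfl | hx
  · simp
  have hhalf : cos x = 1 - 2 * sin (x / 2) ^ 2 := by
    rw [sin_sq_eq_half_sub, mul_div_cancel₀ x two_ne_zero]
    ring
  rw [hhalf, sinc_of_ne_zero (by positivity)]
  field_simp

theorem sq_sub_mul_add_four_mul_le {a b t : ℝ} (hb0 : 1 / 4 ≤ b) (hb1 : b ≤ 1) (ht : 0 ≤ t)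
    (hta : t ≤ a) : (a - t) ^ 2 * (a + 4 * b * t) ≤ a * (a + b * t) ^ 2 := by
  have ha : 0 ≤ a := ht.trans hta
  have hdiff : a * (a + b * t) ^ 2 - (a - t) ^ 2 * (a + 4 * b * t) =
      t * (2 * a ^ 2 * (1 - b) + a * t * (b ^ 2 + (4 * b - 1)) + 4 * b * t * (a - t)) := by
    ring
  have : 0 ≤ 4 * b - 1 := by linarith
  have : 0 ≤ b := by linarith
  have : 0 ≤ 1 - b := sub_nonneg.2 hb1
  have : 0 ≤ a - t := sub_nonneg.2 hta
  rw [← sub_nonneg, hdiff]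
  positivity

theorem sinc_half_sq_lt_div (hx0 : x ≠ 0) (hx : |x| < 2 * π) :
    sinc (x / 2) ^ 2 < π ^ 2 / (π ^ 2 + (π ^ 2 / 6 - 1) * x ^ 2) := by
  have hpi : 9 < π ^ 2 := by nlinarith [pi_gt_three]
  have hpi_lt : π ^ 2 < 12 := by nlinarith [pi_lt_d2, pi_pos]
  have hα : 0 < π ^ 2 / 6 - 1 := by linarith
  have hhalf : |x / 2| < π := by
    rw [abs_div, abs_two]
    linarith
  have hsq : (x / 2) ^ 2 < π ^ 2 := sq_lt_sq' (neg_lt_of_abs_lt hhalf) (lt_of_abs_lt hhalf)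
  have hpoly := sq_sub_mul_add_four_mul_le (b := π ^ 2 / 6 - 1) (by linarith) (by linarith)
    (sq_nonneg (x / 2)) hsq.le
  calc sinc (x / 2) ^ 2
      < ((π ^ 2 - (x / 2) ^ 2) / (π ^ 2 + (π ^ 2 / 6 - 1) * (x / 2) ^ 2)) ^ 2 := by
        gcongr
        · exact (sinc_pos_of_abs_lt_pi hhalf).le
        · exact sinc_lt_div (by positivity) hhalf
    _ ≤ π ^ 2 / (π ^ 2 + (π ^ 2 / 6 - 1) * x ^ 2) := by
        rw [div_pow, div_le_div_iff₀ (by positivity) (by positivity)]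
        linear_combination hpoly

theorem div_lt_two_add_cos_div_three (hx0 : x ≠ 0) :
    (π ^ 2 - x ^ 2) / (π ^ 2 + (π ^ 2 / 6 - 1) * x ^ 2) < (2 + cos x) / 3 := by
  have hpi : 9 < π ^ 2 := by nlinarith [pi_gt_three]
  have hden : 0 < π ^ 2 + (π ^ 2 / 6 - 1) * x ^ 2 := by
    have : 0 < π ^ 2 / 6 - 1 := by linarith
    positivity
  rcases le_or_gt π |x| with hxpi | hxpi
  · have hsq : π ^ 2 ≤ x ^ 2 := by simpa using pow_le_pow_left₀ pi_pos.le hxpi 2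
    have hneg : (π ^ 2 - x ^ 2) / (π ^ 2 + (π ^ 2 / 6 - 1) * x ^ 2) ≤ 0 :=
      div_nonpos_of_nonpos_of_nonneg (sub_nonpos.2 hsq) hden.le
    linarith [neg_one_le_cos x]
  have hsinc := sinc_half_sq_lt_div hx0 (by linarith [pi_pos])
  calc (π ^ 2 - x ^ 2) / (π ^ 2 + (π ^ 2 / 6 - 1) * x ^ 2)
      = 1 - x ^ 2 / 6 * (π ^ 2 / (π ^ 2 + (π ^ 2 / 6 - 1) * x ^ 2)) := by
        rw [eq_sub_iff_add_eq, ← mul_div_assoc, ← add_div, div_eq_one_iff_eq hden.ne']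
        ring
    _ < 1 - x ^ 2 / 6 * sinc (x / 2) ^ 2 := by gcongr
    _ = (2 + cos x) / 3 := by
        rw [cos_eq_one_sub_sinc_half_sq x]
        ring

theorem two_add_cos_div_three_lt_div (hx0 : x ≠ 0) (hx : |x| < π / 2) :
    (2 + cos x) / 3 < (π ^ 2 - x ^ 2) / (π ^ 2 + 1 / 2 * x ^ 2) := by
  have hsq : x ^ 2 < (π / 2) ^ 2 := sq_lt_sq' (neg_lt_of_abs_lt hx) (lt_of_abs_lt hx)
  have hcos : cos x < (π ^ 2 - 4 * x ^ 2) / (π ^ 2 + 1 / 2 * x ^ 2) := by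
    refine (cos_lt_div hx0 hx).trans_le ?_
    have hpi : 1 / 2 < π ^ 2 / 2 - 4 := by nlinarith [pi_gt_three]
    gcongr
    linarith
  calc (2 + cos x) / 3 < (2 + (π ^ 2 - 4 * x ^ 2) / (π ^ 2 + 1 / 2 * x ^ 2)) / 3 := by gcongr
    _ = (π ^ 2 - x ^ 2) / (π ^ 2 + 1 / 2 * x ^ 2) := by
        have : π ^ 2 + 1 / 2 * x ^ 2 ≠ 0 := by positivity
        field_simp
        ring

end Bounds

theorem cusa_huygens_refinement_general {x : ℝ} (hx0 : x ≠ 0) (hx : |x| < π / 2) :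
    sin x / x < (π ^ 2 - x ^ 2) / (π ^ 2 + (π ^ 2 / 6 - 1) * x ^ 2) ∧
    (π ^ 2 - x ^ 2) / (π ^ 2 + (π ^ 2 / 6 - 1) * x ^ 2) < (2 + cos x) / 3 ∧
    (2 + cos x) / 3 < (π ^ 2 - x ^ 2) / (π ^ 2 + (1 / 2) * x ^ 2) := by
  rw [← sinc_of_ne_zero hx0]
  exact ⟨sinc_lt_div hx0 (by linarith [pi_pos]), div_lt_two_add_cos_div_three hx0,
    two_add_cos_div_three_lt_div hx0 hx⟩

theorem cusa_huygens_refinement (x : ℝ) (hx0 : 0 < x) (hxpi : x < Real.pi / 2) :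
    Real.sin x / x < (Real.pi ^ 2 - x ^ 2) / (Real.pi ^ 2 + (Real.pi ^ 2 / 6 - 1) * x ^ 2) ∧
    (Real.pi ^ 2 - x ^ 2) / (Real.pi ^ 2 + (Real.pi ^ 2 / 6 - 1) * x ^ 2) < (2 + Real.cos x) / 3 ∧
    (2 + Real.cos x) / 3 < (Real.pi ^ 2 - x ^ 2) / (Real.pi ^ 2 + (1 / 2) * x ^ 2) :=
  cusa_huygens_refinement_general hx0.ne' (by rwa [abs_of_pos hx0])
end
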